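/- arXiv:2306.10446 — 2 statements merged into one kernel-verified Lean document; each statement's English description precedes it below -/
import Mathlib

section
/- Let F be a finite field and d ≥ 1 a natural number. Let A₁, …, A_m be pairwise non-isomorphic étale F-algebras of dimension d such that every étale F-algebra of dimension d is isomorphic to some A_i (a complete irredundant list of representatives exists and is finite). Then Σ_{i=1}^m 1 / #Aut_{F-alg}(A_i) = 1. -/
namespace EtaleMass

open Module

section Twist

variable {F K : Type*} [Field F] [Field K] [Algebra F K]

/-- The twisted form of `K ^ d` attached to a permutation. -/
def twist {d : ℕ} (φ : K ≃ₐ[F] K) (σ : Equiv.Perm (Fin d)) : Subalgebra F (Fin d → K) where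
  carrier := {f | ∀ k, f (σ k) = φ (f k)}
  mul_mem' := by
    intro a b ha hb k
    simp only [Set.mem_ofPred_eq] at ha hb
    simp [ha k, hb k]
  add_mem' := by
    intro a b ha hb k
    simp only [Set.mem_ofPred_eq] at ha hb
    simp [ha k, hb k]
  algebraMap_mem' := by
    intro r k
    simp

lemma mem_twist {d : ℕ} {φ : K ≃ₐ[F] K} {σ : Equiv.Perm (Fin d)} {f : Fin d → K} :
    f ∈ twist φ σ ↔ ∀ k, f (σ k) = φ (f k) := Iff.rfl

variable {d : ℕ} (φ : K ≃ₐ[F] K) (σ : Equiv.Perm (Fin d)) (N : ℕ)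

lemma mem_twist_pow {f : Fin d → K} (hf : f ∈ twist φ σ) (j : ℕ) (k : Fin d) :
    f ((σ ^ j) k) = (φ ^ j) (f k) := by
  induction j with
  | zero => simp
  | succ j ih =>
    rw [pow_succ', pow_succ', Equiv.Perm.mul_apply, AlgEquiv.mul_apply, ← ih]
    exact hf _

lemma separating (hN : 0 < N) (hφ : φ ^ N = 1) (hσ : σ ^ N = 1)
    (hinj : Function.Injective (fun n : Fin N => φ ^ n.1)) (l : Fin d → K)
    (hl : ∀ f ∈ twist φ σ, ∑ k, l k * f k = 0) : l = 0 := by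
  funext k0
  have key : ∀ c : K, ∑ j ∈ Finset.range N, l ((σ ^ j) k0) * (φ ^ j) c = 0 := by
    intro c
    have hm : (fun k => ∑ j ∈ Finset.range N, if (σ ^ j) k0 = k then (φ ^ j) c else 0)
        ∈ twist φ σ := by
      intro k
      have h1 : φ (∑ j ∈ Finset.range N, if (σ ^ j) k0 = k then (φ ^ j) c else 0)
          = ∑ j ∈ Finset.range N, if (σ ^ (j + 1)) k0 = σ k then (φ ^ (j + 1)) c else 0 := by
        rw [map_sum]
        refine Finset.sum_congr rfl fun j _ => ?_
        rw [pow_succ', pow_succ', Equiv.Perm.mul_apply, AlgEquiv.mul_apply]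
        simp only [EmbeddingLike.apply_eq_iff_eq]
        split_ifs <;> simp
      change _ = φ (∑ j ∈ Finset.range N, if (σ ^ j) k0 = k then (φ ^ j) c else 0)
      rw [h1]
      have h2 := Finset.sum_range_succ
        (fun j => if (σ ^ j) k0 = σ k then (φ ^ j) c else 0) N
      rw [Finset.sum_range_succ', hσ, hφ, pow_zero, pow_zero] at h2
      exact (add_right_cancel h2).symm
    have := hl _ hm
    simp only [Finset.mul_sum] at this
    rw [Finset.sum_comm] at this
    simpa using this
  have li := linearIndependent_monoidHom K K
  have li2 := li.comp (fun n : Fin N => ((φ ^ n.1 : K ≃ₐ[F] K) : K →* K)) (by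
    intro a b hab
    apply hinj
    ext x
    exact DFunLike.congr_fun hab x)
  rw [Fintype.linearIndependent_iff] at li2
  have := li2 (fun n => l ((σ ^ n.1) k0)) (by
    funext c
    have h := key c
    rw [Finset.sum_range] at h
    simpa using h) ⟨0, hN⟩
  simpa using this

lemma eval_injective (hN : 0 < N) (hφ : φ ^ N = 1) (hσ : σ ^ N = 1)
    (hinj : Function.Injective (fun n : Fin N => φ ^ n.1)) (k k' : Fin d)
    (h : ∀ f ∈ twist φ σ, f k = f k') : k = k' := by
  by_contra hne
  have := separating φ σ N hN hφ hσ hinj (Pi.single k 1 - Pi.single k' 1) (by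
    intro f hf
    simp [sub_mul, Pi.single_apply, h f hf])
  have h2 := congrFun this k
  simp [hne] at h2

lemma indep [Finite K] [FiniteDimensional F K]
    (hσ : σ ^ (finrank F K) = 1)
    (hb : Function.Bijective (fun n : Fin (finrank F K) => φ ^ n.1))
    {n : ℕ} (b : Fin n → (Fin d → K)) (hbm : ∀ j, b j ∈ twist φ σ)
    (hli : LinearIndependent F b) (c : Fin n → K) (hc : ∀ k, ∑ j, c j * b j k = 0) : c = 0 := by
  have := Finite.of_injective _ (algebraMap F K).injective
  have htr : ∀ x : K, algebraMap F K (Algebra.trace F K x) =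
      ∑ t : Fin (finrank F K), (φ ^ t.1) x := by
    intro x
    rw [trace_eq_sum_automorphisms]
    exact (Function.Bijective.sum_comp hb (fun g => g x)).symm
  have h1 : ∀ (t : ℕ) (k), ∑ j, (φ ^ t) (c j) * b j k = 0 := by
    intro t k
    have h := congrArg (φ ^ t) (hc ((σ ^ t).symm k))
    rw [map_sum, map_zero] at h
    rw [← h]
    refine Finset.sum_congr rfl fun j _ => ?_
    rw [map_mul, ← mem_twist_pow φ σ (hbm j), Equiv.apply_symm_apply]
  have h2 : ∀ (a : K) j, Algebra.trace F K (c j * a) = 0 := by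
    intro a
    rw [Fintype.linearIndependent_iff] at hli
    apply hli
    funext k
    simp only [Finset.sum_apply, Pi.smul_apply, Pi.zero_apply]
    simp only [Algebra.smul_def, htr, Finset.sum_mul, map_mul]
    rw [Finset.sum_comm]
    refine Finset.sum_eq_zero fun t _ => ?_
    have := congrArg (fun x => (φ ^ t.1) a * x) (h1 t.1 k)
    simp only [mul_zero, Finset.mul_sum] at this
    rw [← this]
    refine Finset.sum_congr rfl fun j _ => ?_
    ring
  funext j
  exact (traceForm_nondegenerate F K).1 (c j) (fun a => h2 a j)

lemma finrank_twist [Finite K] [FiniteDimensional F K]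
    (hφ : φ ^ (finrank F K) = 1) (hσ : σ ^ (finrank F K) = 1)
    (hb : Function.Bijective (fun n : Fin (finrank F K) => φ ^ n.1)) :
    finrank F (twist φ σ) = d := by
  let b := finBasis F (twist φ σ)
  let M : Matrix (Fin (finrank F (twist φ σ))) (Fin d) K := fun j k => (b j : Fin d → K) k
  apply le_antisymm
  · have hi : Function.Injective (Matrix.vecMulLinear M) := by
      rw [← LinearMap.ker_eq_bot, LinearMap.ker_eq_bot']
      intro c hc
      refine indep φ σ hσ hb (fun j => (b j : Fin d → K)) (fun j => (b j).2) ?_ c ?_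
      · exact b.linearIndependent.map' (twist φ σ).val.toLinearMap
          (LinearMap.ker_eq_bot.2 Subtype.val_injective)
      · intro k
        exact congrFun hc k
    simpa using LinearMap.finrank_le_finrank_of_injective hi
  · have hi : Function.Injective (Matrix.mulVecLin M) := by
      rw [← LinearMap.ker_eq_bot, LinearMap.ker_eq_bot']
      intro l hl
      refine separating φ σ (finrank F K) finrank_pos hφ hσ hb.1 l ?_
      intro f hf
      have hf' := b.sum_repr ⟨f, hf⟩
      have hf2 : ∀ k, f k = ∑ j, algebraMap F K (b.repr ⟨f, hf⟩ j) * (b j : Fin d → K) k := by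
        intro k
        have := congrArg (fun x : twist φ σ => (x : Fin d → K) k) hf'
        simp only [AddSubmonoidClass.coe_finsetSum, Finset.sum_apply, SetLike.val_smul,
          Pi.smul_apply] at this
        simp only [Algebra.smul_def] at this
        exact this.symm
      simp only [hf2, Finset.mul_sum]
      rw [Finset.sum_comm]
      refine Finset.sum_eq_zero fun j _ => ?_
      have h3 : ∑ k, (b j : Fin d → K) k * l k = 0 := congrFun hl j
      have h4 := congrArg (fun x => algebraMap F K (b.repr ⟨f, hf⟩ j) * x) h3
      simp only [mul_zero, Finset.mul_sum] at h4
      rw [← h4]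
      refine Finset.sum_congr rfl fun k _ => ?_
      ring
    simpa using LinearMap.finrank_le_finrank_of_injective hi

end Twist

section Count

variable {F K A : Type*} [Field F] [Field K] [Algebra F K] [Finite K] [CommRing A] [Algebra F A]
  [FiniteDimensional F A] [IsReduced A]

lemma finrank_quot_dvd {d : ℕ} (hA : finrank F A = d) (hK : finrank F K = d.factorial)
    (I : MaximalSpectrum A) : finrank F (A ⧸ I.asIdeal) ∣ finrank F K := by
  rw [hK]
  apply Nat.dvd_factorial
  · have := I.isMaximal
    have : Nontrivial (A ⧸ I.asIdeal) := Ideal.Quotient.nontrivial_iff.2 I.isMaximal.ne_top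
    exact finrank_pos
  · rw [← hA]
    exact LinearMap.finrank_le_finrank_of_surjective
      (f := (Ideal.Quotient.mkₐ F I.asIdeal).toLinearMap) Ideal.Quotient.mk_surjective

attribute [local instance] Ideal.Quotient.field

lemma separates {d : ℕ} (hA : finrank F A = d) (hK : finrank F K = d.factorial)
    (a : A) (ha : ∀ f : A →ₐ[F] K, f a = 0) : a = 0 := by
  have : IsArtinianRing A := IsArtinianRing.of_finite F A
  apply (IsArtinianRing.equivPi A).injective
  rw [map_zero]
  funext I
  have := I.isMaximal
  obtain ⟨f⟩ := FiniteField.nonempty_algHom_of_finrank_dvd (finrank_quot_dvd hA hK I)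
  have h := ha (f.comp (Ideal.Quotient.mkₐ F I.asIdeal))
  rw [IsArtinianRing.equivPi_apply]
  exact f.toRingHom.injective (by simpa using h)

lemma card_algHom {d : ℕ} (hA : finrank F A = d) (hK : finrank F K = d.factorial) :
    Nat.card (A →ₐ[F] K) = d := by
  have : IsArtinianRing A := IsArtinianRing.of_finite F A
  have : Fintype (MaximalSpectrum A) := Fintype.ofFinite _
  apply le_antisymm
  · rw [← hA]
    exact card_algHom_le_finrank F A K
  · have h1 : finrank F A = ∑ I : MaximalSpectrum A, finrank F (A ⧸ I.asIdeal) := by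
      rw [((IsArtinianRing.equivPi A).restrictScalars F).toLinearEquiv.finrank_eq]
      exact finrank_pi_fintype F
    have h2 : ∀ I : MaximalSpectrum A,
        Nat.card ((A ⧸ I.asIdeal) →ₐ[F] K) = finrank F (A ⧸ I.asIdeal) := by
      intro I
      have := I.isMaximal
      exact FiniteField.natCard_algHom_of_finrank_dvd (finrank_quot_dvd hA hK I)
    have h3 : d = Nat.card (Σ I : MaximalSpectrum A, (A ⧸ I.asIdeal) →ₐ[F] K) := by
      rw [Nat.card_sigma, ← hA, h1]
      exact Finset.sum_congr rfl fun I _ => (h2 I).symm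
    conv_lhs => rw [h3]
    refine Nat.card_le_card_of_injective
      (fun x => x.2.comp (Ideal.Quotient.mkₐ F x.1.asIdeal)) ?_
    have hker : ∀ (I : MaximalSpectrum A) (f : (A ⧸ I.asIdeal) →ₐ[F] K) (a : A),
        f (Ideal.Quotient.mk I.asIdeal a) = 0 ↔ a ∈ I.asIdeal := by
      intro I f a
      have := I.isMaximal
      rw [← Ideal.Quotient.eq_zero_iff_mem]
      exact map_eq_zero_iff f f.toRingHom.injective
    rintro ⟨I, f⟩ ⟨J, g⟩ hfg
    have hfg' : ∀ a, f (Ideal.Quotient.mk I.asIdeal a) = g (Ideal.Quotient.mk J.asIdeal a) :=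
      fun a => DFunLike.congr_fun hfg a
    obtain rfl : I = J := by
      ext a
      rw [← hker I f, ← hker J g, hfg']
    congr 1
    ext x
    obtain ⟨a, rfl⟩ := Ideal.Quotient.mk_surjective x
    exact hfg' a

lemma card_sigma {d : ℕ} (φ : K ≃ₐ[F] K) (hA : finrank F A = d)
    (hK : finrank F K = d.factorial)
    (hφ : φ ^ (finrank F K) = 1)
    (hb : Function.Bijective (fun n : Fin (finrank F K) => φ ^ n.1)) :
    ∑ σ : Equiv.Perm (Fin d), Nat.card (A ≃ₐ[F] twist φ σ) = d.factorial := by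
  have hKpos : 0 < finrank F K := by rw [hK]; exact d.factorial_pos
  have : FiniteDimensional F K := finite_of_finrank_pos hKpos
  have hσ : ∀ σ : Equiv.Perm (Fin d), σ ^ (finrank F K) = 1 := by
    intro σ
    rw [hK]
    simpa [Fintype.card_perm] using pow_card_eq_one (x := σ)
  have hfin : Finite (A →ₐ[F] K) := inferInstance
  have : Fintype (A →ₐ[F] K) := Fintype.ofFinite _
  have hcard := card_algHom hA hK
  let Φ : (Σ σ : Equiv.Perm (Fin d), A ≃ₐ[F] twist φ σ) → (Fin d ↪ (A →ₐ[F] K)) := fun x =>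
    ⟨fun k => (Pi.evalAlgHom F (fun _ : Fin d => K) k).comp
        ((twist φ x.1).val.comp (x.2 : A →ₐ[F] twist φ x.1)), by
      intro k k' h
      refine eval_injective φ x.1 _ hKpos hφ (hσ _) hb.1 k k' ?_
      intro f hf
      have := DFunLike.congr_fun h (x.2.symm ⟨f, hf⟩)
      simpa using this⟩
  have hΦ : ∀ x k a, Φ x k a = (x.2 a : Fin d → K) k := fun x k a => rfl
  have hbij : Function.Bijective Φ := by
    constructor
    · rintro ⟨σ, ψ⟩ ⟨τ, χ⟩ h
      have h1 : ∀ k a, (ψ a : Fin d → K) k = (χ a : Fin d → K) k := fun k a =>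
        DFunLike.congr_fun (DFunLike.congr_fun h k) a
      obtain rfl : σ = τ := by
        ext k : 1
        apply (Φ ⟨σ, ψ⟩).injective
        ext a
        rw [hΦ, hΦ]
        rw [(ψ a).2 k, h1, h1, (χ a).2 k]
      congr 1
      ext a k
      exact h1 k a
    · intro e
      have hesurj : Function.Surjective e := by
        refine ((Fintype.bijective_iff_injective_and_card e).2 ⟨e.injective, ?_⟩).2
        rw [Fintype.card_fin, ← Nat.card_eq_fintype_card, hcard]
      choose s hs using fun k => hesurj ((φ : K →ₐ[F] K).comp (e k))
      have hsinj : Function.Injective s := by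
        intro k k' h
        apply e.injective
        ext a
        apply φ.injective
        have := (hs k).symm.trans ((congrArg e h).trans (hs k'))
        exact DFunLike.congr_fun this a
      let σ : Equiv.Perm (Fin d) := Equiv.ofBijective s (Finite.injective_iff_bijective.1 hsinj)
      let g0 : A →ₐ[F] (Fin d → K) := AlgHom.pi (fun k => e k)
      let g : A →ₐ[F] twist φ σ := g0.codRestrict (twist φ σ) (by
        intro a k
        exact DFunLike.congr_fun (hs k) a)
      have hgi : Function.Injective g := by
        rw [injective_iff_map_eq_zero]
        intro a ha
        apply separates hA hK a
        intro f
        obtain ⟨k, rfl⟩ := hesurj f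
        exact congrFun (congrArg Subtype.val ha) k
      have hgs : Function.Surjective g :=
        (LinearMap.injective_iff_surjective_of_finrank_eq_finrank (f := g.toLinearMap)
          (by rw [hA, finrank_twist φ σ hφ (hσ σ) hb])).1 hgi
      refine ⟨⟨σ, AlgEquiv.ofBijective g ⟨hgi, hgs⟩⟩, ?_⟩
      ext k a
      rfl
  have hfinS : ∀ σ : Equiv.Perm (Fin d), Finite (A ≃ₐ[F] twist φ σ) := by
    intro σ
    exact Finite.of_injective (fun ψ => Φ ⟨σ, ψ⟩) (fun ψ χ h => by
      have := hbij.1 h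
      simpa using this)
  rw [← Nat.card_sigma, Nat.card_congr (Equiv.ofBijective Φ hbij), Nat.card_eq_fintype_card,
    Fintype.card_embedding_eq, ← Nat.card_eq_fintype_card, hcard, Fintype.card_fin,
    Nat.descFactorial_self]

end Count

end EtaleMass

open EtaleMass in
/-- **Mass formula for étale algebras over a finite field.**
Let `F` be a finite field and `d ≥ 1`.  If `A₁, …, Aₘ` is a complete irredundant list of
representatives of the isomorphism classes of étale `F`-algebras of dimension `d`
(for a finite field, étale = commutative, finite-dimensional and reduced), then
`Σᵢ 1/#Aut_{F-alg}(Aᵢ) = 1`. -/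
theorem mass_formula_etale_algebras (F : Type*) [Field F] [Finite F] (d m : ℕ)
    (hd : 1 ≤ d) (A : Fin m → Type*) [∀ i, CommRing (A i)] [∀ i, Algebra F (A i)]
    (hfd : ∀ i, FiniteDimensional F (A i))
    (hrank : ∀ i, Module.finrank F (A i) = d)
    (hred : ∀ i, IsReduced (A i))
    (hirr : ∀ i j, Nonempty (A i ≃ₐ[F] A j) → i = j)
    (hcomplete : ∀ (B : Type*) [CommRing B] [Algebra F B], FiniteDimensional F B →
      Module.finrank F B = d → IsReduced B → ∃ i, Nonempty (B ≃ₐ[F] A i)) :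
    ∑ i : Fin m, (1 : ℚ) / (Nat.card (A i ≃ₐ[F] A i)) = 1 := by
  classical
  have := Fintype.ofFinite F
  obtain ⟨p, hp⟩ := CharP.exists F
  have hpp : Fact p.Prime := ⟨CharP.char_is_prime F p⟩
  have : NeZero d.factorial := ⟨d.factorial_ne_zero⟩
  let K := FiniteField.Extension F p d.factorial
  have hK : Module.finrank F K = d.factorial := FiniteField.finrank_extension F p d.factorial
  let φ : K ≃ₐ[F] K := FiniteField.frobeniusAlgEquivOfAlgebraic F K
  have hφ : φ ^ (Module.finrank F K) = 1 := by
    rw [← FiniteField.orderOf_frobeniusAlgEquivOfAlgebraic F K]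
    exact pow_orderOf_eq_one _
  have hb : Function.Bijective (fun n : Fin (Module.finrank F K) => φ ^ n.1) :=
    FiniteField.bijective_frobeniusAlgEquivOfAlgebraic_pow F K
  have hσ : ∀ σ : Equiv.Perm (Fin d), σ ^ (Module.finrank F K) = 1 := by
    intro σ
    rw [hK]
    simpa [Fintype.card_perm] using pow_card_eq_one (x := σ)
  have hex : ∀ σ : Equiv.Perm (Fin d), ∃ i, Nonempty (twist φ σ ≃ₐ[F] A i) := by
    intro σ
    have hr : IsReduced (twist φ σ) :=
      isReduced_of_injective (twist φ σ).val Subtype.val_injective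
    have hc := hcomplete (Shrink (twist φ σ))
    obtain ⟨i, ⟨f⟩⟩ := hc
      (Module.Finite.equiv (Shrink.algEquiv.{u_3} F (twist φ σ)).symm.toLinearEquiv)
      ((Shrink.algEquiv.{u_3} F (twist φ σ)).toLinearEquiv.finrank_eq.trans
        (finrank_twist φ σ hφ (hσ σ) hb))
      (isReduced_of_injective (Shrink.algEquiv.{u_3} F (twist φ σ))
        (Shrink.algEquiv.{u_3} F (twist φ σ)).injective)
    exact ⟨i, ⟨(Shrink.algEquiv.{u_3} F (twist φ σ)).symm.trans f⟩⟩
  choose ι hι using hex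
  have hmul : ∀ i, (Finset.univ.filter (fun σ => ι σ = i)).card * Nat.card (A i ≃ₐ[F] A i)
      = d.factorial := by
    intro i
    have := hfd i
    have := hred i
    rw [← card_sigma (A := A i) φ (hrank i) hK hφ hb, Finset.card_filter, Finset.sum_mul]
    refine Finset.sum_congr rfl fun σ _ => ?_
    obtain ⟨f⟩ := hι σ
    split_ifs with h
    · subst h
      rw [one_mul]
      exact Nat.card_congr
        { toFun := fun g => g.trans f.symm
          invFun := fun g => g.trans f
          left_inv := fun g => by ext; simp
          right_inv := fun g => by ext; simp }
    · rw [zero_mul]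
      have : IsEmpty (A i ≃ₐ[F] twist φ σ) := ⟨fun g => h (hirr _ _ ⟨(g.trans f).symm⟩)⟩
      simp
  have hd0 : (d.factorial : ℚ) ≠ 0 := by exact_mod_cast d.factorial_ne_zero
  have hterm : ∀ i, (1 : ℚ) / (Nat.card (A i ≃ₐ[F] A i)) =
      ((Finset.univ.filter (fun σ => ι σ = i)).card : ℚ) / d.factorial := by
    intro i
    have h := hmul i
    have hne : (Nat.card (A i ≃ₐ[F] A i) : ℚ) ≠ 0 := by
      intro h0
      rw [Nat.cast_eq_zero] at h0
      rw [h0, mul_zero] at h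
      exact d.factorial_ne_zero h.symm
    rw [div_eq_div_iff hne hd0, one_mul]
    exact_mod_cast h.symm
  simp only [hterm]
  rw [← Finset.sum_div, div_eq_one_iff_eq hd0]
  have h := Finset.card_eq_sum_card_fiberwise (f := ι) (s := Finset.univ) (t := Finset.univ)
    (fun _ _ => by simp)
  rw [Finset.card_univ, Fintype.card_perm, Fintype.card_fin] at h
  rw [h]
  push_cast
  rfl
end

section
/- Let F be a finite field of cardinality q with q coprime to 6. Then the number of pairs (A,B) of symmetric 3×3 matrices over F with Δ₄(A,B) ≠ 0 equals q⁴(q−1)(q²−1)²(q³−1), i.e. q¹²·(1 − q⁻¹)(1 − q⁻²)²(1 − q⁻³). -/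
/-- The discriminant of the binary cubic form `a·x³ + b·x²y + c·xy² + d·y³`. -/
def disc3 {R : Type*} [CommRing R] (a b c d : R) : R :=
  b ^ 2 * c ^ 2 - 4 * a * c ^ 3 - 4 * b ^ 3 * d - 27 * a ^ 2 * d ^ 2 + 18 * a * b * c * d

/-- The binary cubic form `4·det(x·A − y·B)` associated to a pair of 3×3 matrices,
as an element of `R[x][y]` (the inner variable is `x`, the outer variable is `y`). -/
noncomputable def pairCubic {R : Type*} [CommRing R] (A B : Matrix (Fin 3) (Fin 3) R) :
    Polynomial (Polynomial R) :=
  4 * Matrix.det (Matrix.of fun i j =>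
    (Polynomial.C (Polynomial.C (A i j) * Polynomial.X) -
      Polynomial.X * Polynomial.C (Polynomial.C (B i j)) : Polynomial (Polynomial R)))

/-- The discriminant `Δ₄(A,B)` of a pair of 3×3 matrices: writing
`4·det(x·A − y·B) = a·x³ + b·x²y + c·xy² + d·y³`, it is `Δ₃(a,b,c,d)`. -/
noncomputable def disc4 {R : Type*} [CommRing R] (A B : Matrix (Fin 3) (Fin 3) R) : R :=
  disc3 (((pairCubic A B).coeff 0).coeff 3) (((pairCubic A B).coeff 1).coeff 2)
    (((pairCubic A B).coeff 2).coeff 1) (((pairCubic A B).coeff 3).coeff 0)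

open Matrix in
/-- The coefficients of `4 det (xA - yB)`. -/
def cub {R : Type*} [CommRing R] (A B : Matrix (Fin 3) (Fin 3) R) : R × R × R × R :=
  (4 * A.det, -4 * (A.adjugate * B).trace, 4 * (A * B.adjugate).trace, -4 * B.det)

/-- Discriminant of a quadruple of coefficients. -/
def dq {R : Type*} [CommRing R] (f : R × R × R × R) : R := disc3 f.1 f.2.1 f.2.2.1 f.2.2.2

theorem disc4_eq {R : Type*} [CommRing R] (A B : Matrix (Fin 3) (Fin 3) R) :
    disc4 A B = dq (cub A B) := by
  have h : pairCubic A B = Polynomial.C (Polynomial.C (cub A B).1 * Polynomial.X ^ 3)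
      + Polynomial.C (Polynomial.C (cub A B).2.1 * Polynomial.X ^ 2) * Polynomial.X
      + Polynomial.C (Polynomial.C (cub A B).2.2.1 * Polynomial.X) * Polynomial.X ^ 2
      + Polynomial.C (Polynomial.C (cub A B).2.2.2) * Polynomial.X ^ 3 := by
    simp only [pairCubic, cub, Matrix.det_fin_three, Matrix.adjugate_fin_three, Matrix.trace_fin_three,
      Matrix.mul_apply, Fin.sum_univ_three, Matrix.of_apply, Matrix.cons_val]
    simp only [map_mul, map_add, map_sub, map_neg, map_ofNat, map_pow]
    ring
  unfold disc4 dq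
  rw [h]
  congr 1 <;> simp only [Polynomial.coeff_add, Polynomial.coeff_C_mul_X_pow, Polynomial.coeff_C_mul_X,
    Polynomial.coeff_C] <;> simp [Polynomial.coeff_C]

theorem cub_mul_left {R : Type*} [CommRing R] (P A B : Matrix (Fin 3) (Fin 3) R) :
    cub (P * A) (P * B) = P.det • cub A B := by
  have h1 : (P * A).adjugate * (P * B) = P.det • (A.adjugate * B) := by
    rw [Matrix.adjugate_mul_distrib, Matrix.mul_assoc, ← Matrix.mul_assoc P.adjugate,
      Matrix.adjugate_mul]; simp
  have h2 : ((P * A) * (P * B).adjugate).trace = P.det * (A * B.adjugate).trace := by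
    rw [Matrix.adjugate_mul_distrib, Matrix.trace_mul_comm, Matrix.mul_assoc,
      ← Matrix.mul_assoc P.adjugate, Matrix.adjugate_mul]
    simp [Matrix.trace_mul_comm A]
  simp only [cub, h1, h2, Matrix.det_mul, Matrix.trace_smul, Prod.smul_mk, smul_eq_mul, Prod.mk.injEq]
  refine ⟨by ring, by ring, by ring, by ring⟩

theorem cub_mul_right {R : Type*} [CommRing R] (P A B : Matrix (Fin 3) (Fin 3) R) :
    cub (A * P) (B * P) = P.det • cub A B := by
  have h1 : ((A * P).adjugate * (B * P)).trace = P.det * (A.adjugate * B).trace := by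
    rw [Matrix.adjugate_mul_distrib, Matrix.trace_mul_comm, Matrix.mul_assoc,
      ← Matrix.mul_assoc P, Matrix.mul_adjugate]
    simp [Matrix.trace_mul_comm B]
  have h2 : ((A * P) * (B * P).adjugate) = P.det • (A * B.adjugate) := by
    rw [Matrix.adjugate_mul_distrib, Matrix.mul_assoc,
      ← Matrix.mul_assoc P, Matrix.mul_adjugate]
    simp
  simp only [cub, h1, h2, Matrix.det_mul, Matrix.trace_smul, Prod.smul_mk, smul_eq_mul, Prod.mk.injEq]
  refine ⟨by ring, by ring, by ring, by ring⟩

theorem cub_transpose {R : Type*} [CommRing R] (A B : Matrix (Fin 3) (Fin 3) R) :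
    cub A.transpose B.transpose = cub A B := by
  simp only [cub, Matrix.det_transpose, ← Matrix.adjugate_transpose, ← Matrix.transpose_mul,
    Matrix.trace_transpose]
  rw [Matrix.trace_mul_comm B, Matrix.trace_mul_comm A]

/-- Shear substitution on coefficients. -/
def shear {R : Type*} [CommRing R] (t : R) (f : R × R × R × R) : R × R × R × R :=
  (f.1 + f.2.1 * t + f.2.2.1 * t ^ 2 + f.2.2.2 * t ^ 3, f.2.1 + 2 * f.2.2.1 * t + 3 * f.2.2.2 * t ^ 2,
    f.2.2.1 + 3 * f.2.2.2 * t, f.2.2.2)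

theorem cub_shear {R : Type*} [CommRing R] (t : R) (A B : Matrix (Fin 3) (Fin 3) R) :
    cub (A - t • B) B = shear t (cub A B) := by
  simp only [shear, cub, Matrix.det_fin_three, Matrix.adjugate_fin_three, Matrix.trace_fin_three,
      Matrix.mul_apply, Fin.sum_univ_three, Matrix.of_apply, Matrix.cons_val, Matrix.sub_apply,
      Matrix.smul_apply, smul_eq_mul, Prod.mk.injEq]
  refine ⟨by ring, by ring, by ring, trivial⟩

theorem dq_shear {R : Type*} [CommRing R] (t : R) (f : R × R × R × R) : dq (shear t f) = dq f := by
  simp only [dq, disc3, shear]; ring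

theorem dq_smul {R : Type*} [CommRing R] (t : R) (f : R × R × R × R) : dq (t • f) = t ^ 4 * dq f := by
  simp only [dq, disc3, Prod.smul_fst, Prod.smul_snd, smul_eq_mul]; ring

theorem shear_smul {R : Type*} [CommRing R] (t l : R) (f : R × R × R × R) :
    shear t (l • f) = l • shear t f := by
  ext <;> simp only [shear, Prod.smul_fst, Prod.smul_snd, smul_eq_mul] <;> ring

theorem shear_neg {R : Type*} [CommRing R] (t : R) (f : R × R × R × R) :
    shear (-t) (shear t f) = f := by
  ext <;> simp only [shear] <;> ring

theorem exists_shear {F : Type*} [Field F] (h2 : (2 : F) ≠ 0) (h3 : (3 : F) ≠ 0)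
    (f : F × F × F × F) (hf : dq f ≠ 0) : ∃ t, (shear t f).1 ≠ 0 := by
  by_contra! h
  obtain ⟨a, b, c, d⟩ := f
  have e0 := h 0
  have e1 := h 1
  have e2 := h (-1)
  have e3 := h 2
  simp only [shear] at e0 e1 e2 e3
  have ha : a = 0 := by linear_combination e0
  have hc : c = 0 := by
    apply (mul_eq_zero.1 (_ : 2 * c = 0)).resolve_left h2
    linear_combination e1 + e2 - 2 * e0
  have hd : d = 0 := by
    have : (2 * 3) * d = 0 := by linear_combination e3 - 2 * e1 +e0 - 2 * hc
    exact (mul_eq_zero.1 this).resolve_left (mul_ne_zero h2 h3)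
  apply hf
  simp [dq, disc3, ha, hc, hd]

/-- The companion matrix. -/
def comp3 {R : Type*} [CommRing R] (b c d : R) : Matrix (Fin 3) (Fin 3) R :=
  !![0, 0, -d; 1, 0, -c; 0, 1, -b]

theorem cub_comp3 {R : Type*} [CommRing R] (b c d : R) :
    cub 1 (comp3 b c d) = (4 : R) • ((1, b, c, d) : R × R × R × R) := by
  simp [comp3, cub, Matrix.det_fin_three, Matrix.adjugate_fin_three, Matrix.trace_fin_three]

open Matrix in
/-- The Krylov matrix `(v, Tv, T²v)`. -/
def kry {R : Type*} [CommRing R] (T : Matrix (Fin 3) (Fin 3) R) (v : Fin 3 → R) :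
    Matrix (Fin 3) (Fin 3) R := Matrix.of fun i j => ((T ^ (j : ℕ)) *ᵥ v) i

open Matrix in
theorem mul_kry_of_comm {R : Type*} [CommRing R] (P T T' : Matrix (Fin 3) (Fin 3) R) (v : Fin 3 → R)
    (h : T * P = P * T') : P * kry T' v = kry T (P *ᵥ v) := by
  have hn : ∀ n : ℕ, T ^ n * P = P * T' ^ n := by
    intro n
    induction n with
    | zero => simp
    | succ n ih => rw [pow_succ, Matrix.mul_assoc, h, ← Matrix.mul_assoc, ih, pow_succ, Matrix.mul_assoc]
  ext i j
  have : (P * kry T' v) i j = (P *ᵥ ((T' ^ (j : ℕ)) *ᵥ v)) i := rfl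
  rw [this, mulVec_mulVec, ← hn, ← mulVec_mulVec]
  rfl

theorem det_of_trace {R : Type*} [CommRing R] [IsDomain R] (h2 : (2 : R) ≠ 0)
    (T : Matrix (Fin 3) (Fin 3) R) (b c d : R)
    (h : cub 1 T = (4 : R) • ((1, b, c, d) : R × R × R × R)) :
    b = -T.trace ∧ c = T.adjugate.trace ∧ d = -T.det := by
  have h4 : (4 : R) ≠ 0 := by
    have : (4 : R) = 2 * 2 := by norm_num
    rw [this]; exact mul_ne_zero h2 h2
  simp only [cub, Prod.smul_mk, smul_eq_mul, Prod.mk.injEq, Matrix.adjugate_one, Matrix.one_mul] at h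
  obtain ⟨-, hb, hc, hd⟩ := h
  refine ⟨mul_left_cancel₀ h4 ?_, mul_left_cancel₀ h4 ?_, mul_left_cancel₀ h4 ?_⟩
  · linear_combination -hb
  · linear_combination -hc
  · linear_combination -hd

theorem mul_kry {R : Type*} [CommRing R] [IsDomain R] (h2 : (2 : R) ≠ 0)
    (T : Matrix (Fin 3) (Fin 3) R) (b c d : R) (v : Fin 3 → R)
    (h : cub 1 T = (4 : R) • ((1, b, c, d) : R × R × R × R)) :
    T * kry T v = kry T v * comp3 b c d := by
  obtain ⟨rfl, rfl, rfl⟩ := det_of_trace h2 T b c d h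
  ext i j
  fin_cases i <;> fin_cases j <;>
  simp [kry, comp3, pow_two, Matrix.mul_apply, Matrix.mulVec, dotProduct, Fin.sum_univ_three,
    Matrix.det_fin_three, Matrix.adjugate_fin_three, Matrix.trace_fin_three] <;> ring

open Matrix in
theorem eq_kry {R : Type*} [CommRing R]
    (T g : Matrix (Fin 3) (Fin 3) R) (b c d : R)
    (h : T * g = g * comp3 b c d) : g = kry T (fun i => g i 0) := by
  have h0 : (fun i => g i 1) = T *ᵥ (fun i => g i 0) := by
    funext i
    have := congrFun (congrFun h i) 0
    simp only [mul_apply, comp3, Fin.sum_univ_three] at this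
    simpa [mulVec, dotProduct, Fin.sum_univ_three] using this.symm
  have h1 : (fun i => g i 2) = T *ᵥ (fun i => g i 1) := by
    funext i
    have := congrFun (congrFun h i) 1
    simp only [mul_apply, comp3, Fin.sum_univ_three] at this
    simpa [mulVec, dotProduct, Fin.sum_univ_three] using this.symm
  ext i j
  fin_cases j
  · simp [kry]
  · simpa [kry] using congrFun h0 i
  · rw [h0] at h1
    simpa [kry, pow_two] using congrFun h1 i

theorem cub_conj {F : Type*} [Field F] (T T' P : Matrix (Fin 3) (Fin 3) F) (hP : P.det ≠ 0)
    (h : T * P = P * T') : cub 1 T = cub 1 T' := by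
  have h1 := cub_mul_right P 1 T
  have h2 := cub_mul_left P 1 T'
  rw [h, one_mul] at h1
  rw [mul_one] at h2
  exact smul_right_injective _ hP (h1.symm.trans h2)

open Matrix in
/-- Existence of a cyclic vector for a matrix with prescribed first column. -/
theorem exists_cyclic_aux {F : Type*} [Field F] (h2 : (2 : F) ≠ 0)
    (T : Matrix (Fin 3) (Fin 3) F) (b c d : F) (hd : disc3 1 b c d ≠ 0)
    (h : cub 1 T = (4 : F) • ((1, b, c, d) : F × F × F × F))
    (t0 : T 0 0 = 0) (t1 : T 1 0 = 1) (t2 : T 2 0 = 0) : ∃ w, (kry T w).det ≠ 0 := by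
  obtain ⟨rfl, rfl, rfl⟩ := det_of_trace h2 T b c d h
  by_cases hη : T 2 1 = 0
  · refine ⟨![1 + T 0 1 * T 1 2 - T 0 2 * (T 1 1 - T 2 2), T 2 2 * T 1 2 + T 0 2,
      T 2 2 ^ 2 - T 1 1 * T 2 2 - T 0 1], ?_⟩
    have hp : T 2 2 ^ 2 - T 1 1 * T 2 2 - T 0 1 ≠ 0 := by
      intro hp
      apply hd
      simp only [disc3, trace_fin_three, adjugate_fin_three, det_fin_three, of_apply, cons_val,
        t0, t1, t2, hη]
      linear_combination ((T 2 2 ^ 2 - T 1 1 * T 2 2 - T 0 1) * (T 1 1 ^ 2 + 4 * T 0 1)) * hp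
    have : ∀ x : F, x = (T 2 2 ^ 2 - T 1 1 * T 2 2 - T 0 1) ^ 2 → x ≠ 0 := by
      rintro x rfl
      exact pow_ne_zero 2 hp
    apply this
    simp [kry, det_fin_three, pow_two, mulVec, dotProduct, Fin.sum_univ_three, mul_apply, t0, t1, t2, hη]
    ring
  · refine ⟨![1, 0, 0], ?_⟩
    simpa [kry, det_fin_three, pow_two, mulVec, dotProduct, Fin.sum_univ_three, mul_apply,
      t0, t1, t2] using hη

open Matrix in
theorem exists_cyclic {F : Type*} [Field F] (h2 : (2 : F) ≠ 0)
    (T : Matrix (Fin 3) (Fin 3) F) (b c d : F) (hd : disc3 1 b c d ≠ 0)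
    (h : cub 1 T = (4 : F) • ((1, b, c, d) : F × F × F × F)) : ∃ w, (kry T w).det ≠ 0 := by
  by_cases hs : ∃ w u : Fin 3 → F, (Matrix.of fun i => ![w i, (T *ᵥ w) i, u i]).det ≠ 0
  · obtain ⟨w, u, hP⟩ := hs
    set P : Matrix (Fin 3) (Fin 3) F := Matrix.of fun i => ![w i, (T *ᵥ w) i, u i] with hPdef
    have hu : IsUnit P.det := isUnit_iff_ne_zero.2 hP
    have hTP : T * P = P * (P⁻¹ * (T * P)) := by
      rw [← Matrix.mul_assoc, mul_nonsing_inv _ hu, Matrix.one_mul]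
    have hcol : ∀ i, (P⁻¹ * (T * P)) i 0 = (1 : Matrix (Fin 3) (Fin 3) F) i 1 := by
      intro i
      rw [← nonsing_inv_mul P hu, mul_apply, mul_apply]
      refine Finset.sum_congr rfl fun k _ => ?_
      congr 1
    obtain ⟨v, hv⟩ := exists_cyclic_aux h2 (P⁻¹ * (T * P)) b c d hd
      ((cub_conj _ _ _ hP hTP).symm.trans h) (by rw [hcol]; simp) (by rw [hcol]; simp)
      (by rw [hcol]; simp)
    refine ⟨P *ᵥ v, ?_⟩
    rw [← mul_kry_of_comm _ _ _ _ hTP, det_mul]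
    exact mul_ne_zero hP hv
  · exfalso
    push Not at hs
    obtain ⟨rfl, rfl, rfl⟩ := det_of_trace h2 T b c d h
    have e1 := hs ![1, 0, 0] ![0, 1, 0]
    have e2 := hs ![1, 0, 0] ![0, 0, 1]
    have e3 := hs ![0, 1, 0] ![1, 0, 0]
    have e4 := hs ![0, 1, 0] ![0, 0, 1]
    have e5 := hs ![0, 0, 1] ![1, 0, 0]
    have e6 := hs ![0, 0, 1] ![0, 1, 0]
    have e7 := hs ![1, 1, 0] ![0, 0, 1]
    have e8 := hs ![1, 0, 1] ![0, 1, 0]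
    simp [det_fin_three, mulVec, dotProduct, Fin.sum_univ_three] at e1 e2 e3 e4 e5 e6 e7 e8
    have e7' : T 1 1 = T 0 0 := by linear_combination e7 - e2 + e4
    have e8' : T 2 2 = T 0 0 := by linear_combination -e8 - e1 + e6
    apply hd
    simp only [disc3, trace_fin_three, adjugate_fin_three, det_fin_three, of_apply, cons_val,
      e1, e2, e3, e4, e5, e6, e7', e8']
    ring

open Matrix in
theorem kry_gram_symm {R : Type*} [CommRing R] (T : Matrix (Fin 3) (Fin 3) R) (w v : Fin 3 → R) :
    ((kry T w)ᵀ * kry Tᵀ v).IsSymm := by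
  have key : ∀ i j : Fin 3, ((kry T w)ᵀ * kry Tᵀ v) i j = ((T ^ (j + i : ℕ)) *ᵥ w) ⬝ᵥ v := by
    intro i j
    have : ((kry T w)ᵀ * kry Tᵀ v) i j = (T ^ (i : ℕ) *ᵥ w) ⬝ᵥ ((Tᵀ ^ (j : ℕ)) *ᵥ v) := rfl
    rw [this, ← transpose_pow, mulVec_transpose, dotProduct_comm, ← dotProduct_mulVec,
      mulVec_mulVec, ← pow_add, dotProduct_comm]
  ext i j
  rw [transpose_apply, key, key, add_comm]

/-- Scaled fibres of the cubic resolvent map. -/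
abbrev MSet {F : Type*} [Field F] (f : F × F × F × F) : Type _ :=
  {x : Fˣ × (Matrix (Fin 3) (Fin 3) F × Matrix (Fin 3) (Fin 3) F) //
    x.2.1.IsSymm ∧ x.2.2.IsSymm ∧ cub x.2.1 x.2.2 = x.1.1 • f}

open Matrix in
theorem card_MSet_aux {F : Type*} [Field F] (h2 : (2 : F) ≠ 0)
    (f : F × F × F × F) (hf : dq f ≠ 0) (ha : f.1 ≠ 0) :
    Nat.card (MSet f) = Nat.card (GL (Fin 3) F) := by
  classical
  obtain ⟨a, b, c, d⟩ := f
  simp only at ha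
  have h4 : (4 : F) ≠ 0 := by
    have : (4 : F) = 2 * 2 := by norm_num
    rw [this]; exact mul_ne_zero h2 h2
  set b' := b / a with hb'
  set c' := c / a with hc'
  set d' := d / a with hd'
  have hfe : ((a, b, c, d) : F × F × F × F) = a • ((1, b', c', d') : F × F × F × F) := by
    simp [hb', hc', hd', mul_div_cancel₀ _ ha]
  have hdisc : disc3 1 b' c' d' ≠ 0 := by
    rw [hfe, dq_smul] at hf
    exact (mul_ne_zero_iff.1 hf).2
  have hcyc : ∀ T : Matrix (Fin 3) (Fin 3) F, ∃ w,
      cub 1 T = (4 : F) • ((1, b', c', d') : F × F × F × F) → (kry T w).det ≠ 0 := by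
    intro T
    by_cases h : cub 1 T = (4 : F) • ((1, b', c', d') : F × F × F × F)
    · obtain ⟨w, hw⟩ := exists_cyclic h2 T _ _ _ hdisc h
      exact ⟨w, fun _ => hw⟩
    · exact ⟨0, fun h' => absurd h' h⟩
  choose w hw using hcyc
  -- basic facts about points of the fibre
  have fact : ∀ x : MSet (a, b, c, d), x.1.2.1.det ≠ 0 ∧ (x.1.1 : F) = 4 * x.1.2.1.det / a ∧
      cub 1 (x.1.2.1⁻¹ * x.1.2.2) = (4 : F) • ((1, b', c', d') : F × F × F × F) ∧
      x.1.2.1 * (x.1.2.1⁻¹ * x.1.2.2) = x.1.2.2 ∧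
      (x.1.2.1⁻¹ * x.1.2.2)ᵀ * x.1.2.1 = x.1.2.1 * (x.1.2.1⁻¹ * x.1.2.2) := by
    rintro ⟨⟨l, A, B⟩, hA, hB, hAB⟩
    simp only at hA hB hAB ⊢
    have hl : 4 * A.det = l * a := congrArg Prod.fst hAB
    have hdet : A.det ≠ 0 := by
      intro h0
      rw [h0, mul_zero] at hl
      exact (mul_ne_zero l.ne_zero ha) hl.symm
    have hu : IsUnit A.det := isUnit_iff_ne_zero.2 hdet
    have hAT : A * (A⁻¹ * B) = B := by
      rw [← Matrix.mul_assoc, mul_nonsing_inv _ hu, Matrix.one_mul]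
    refine ⟨hdet, by field_simp; linear_combination -hl, ?_, hAT, ?_⟩
    · have := cub_mul_left A 1 (A⁻¹ * B)
      rw [hAT, Matrix.mul_one, hAB, hfe, smul_smul, ← hl, mul_comm, mul_smul] at this
      exact (smul_right_injective _ hdet this).symm
    · rw [hAT]
      have : ((A⁻¹ * B)ᵀ * A) = (A * (A⁻¹ * B))ᵀ := by
        rw [transpose_mul A, hA.eq]
      rw [this, hAT, hB.eq]
  have hgdet : ∀ x : MSet (a, b, c, d),
      (x.1.2.1 * kry (x.1.2.1⁻¹ * x.1.2.2) (w (x.1.2.1⁻¹ * x.1.2.2))).det ≠ 0 := by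
    intro x
    obtain ⟨h1, h2, h3, h4, h5⟩ := fact x
    rw [det_mul]
    exact mul_ne_zero h1 (hw _ h3)
  refine Nat.card_congr (Equiv.ofBijective (fun x => GeneralLinearGroup.mkOfDetNeZero _ (hgdet x)) ⟨?_, ?_⟩)
  · intro x y hxy
    have hg : x.1.2.1 * kry (x.1.2.1⁻¹ * x.1.2.2) (w (x.1.2.1⁻¹ * x.1.2.2)) =
      y.1.2.1 * kry (y.1.2.1⁻¹ * y.1.2.2) (w (y.1.2.1⁻¹ * y.1.2.2)) := congrArg Units.val hxy
    have hgx := hgdet x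
    obtain ⟨x1, x2, x3, x4, x5⟩ := fact x
    obtain ⟨y1, y2, y3, y4, y5⟩ := fact y
    obtain ⟨⟨l, A, B⟩, hA, hB, hAB⟩ := x
    obtain ⟨⟨l', A', B'⟩, hA', hB', hAB'⟩ := y
    simp only at *
    clear hxy
    set T := A⁻¹ * B
    set T' := A'⁻¹ * B'
    have kx : Tᵀ * (A * kry T (w T)) = (A * kry T (w T)) * comp3 b' c' d' := by
      rw [← Matrix.mul_assoc, x5, Matrix.mul_assoc, mul_kry h2 T _ _ _ _ x3, Matrix.mul_assoc]
    have ky : T'ᵀ * (A' * kry T' (w T')) = (A' * kry T' (w T')) * comp3 b' c' d' := by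
      rw [← Matrix.mul_assoc, y5, Matrix.mul_assoc, mul_kry h2 T' _ _ _ _ y3, Matrix.mul_assoc]
    rw [← hg, ← kx] at ky
    have hgu : IsUnit (A * kry T (w T)) := (isUnit_iff_isUnit_det _).2 (isUnit_iff_ne_zero.2 hgx)
    have hT : T' = T := transpose_injective (hgu.mul_right_cancel ky)
    rw [hT] at hg
    have hku : IsUnit (kry T (w T)) := (isUnit_iff_isUnit_det _).2 (isUnit_iff_ne_zero.2 (hw _ x3))
    have hAA : A = A' := hku.mul_right_cancel hg
    have hBB : B = B' := by rw [← x4, ← y4, hT, hAA]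
    have hll : l = l' := by
      ext
      rw [x2, y2, hAA]
    simp [hAA, hBB, hll]
  · intro g
    have hgu : IsUnit (g : Matrix (Fin 3) (Fin 3) F).det := (isUnit_iff_isUnit_det _).1 g.isUnit
    set G : Matrix (Fin 3) (Fin 3) F := (g : Matrix (Fin 3) (Fin 3) F) with hG
    set T : Matrix (Fin 3) (Fin 3) F := (G * comp3 b' c' d' * G⁻¹)ᵀ with hT
    have hTG : Tᵀ * G = G * comp3 b' c' d' := by
      rw [hT, transpose_transpose, Matrix.mul_assoc, nonsing_inv_mul _ hgu, Matrix.mul_one]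
    have hcT : cub 1 T = (4 : F) • ((1, b', c', d') : F × F × F × F) := by
      rw [← cub_comp3, ← cub_conj _ _ _ hgu.ne_zero hTG]
      have := cub_transpose 1 T
      rw [transpose_one] at this
      exact this.symm
    have hK : IsUnit (kry T (w T)).det := isUnit_iff_ne_zero.2 (hw _ hcT)
    set K := kry T (w T) with hKdef
    set A := G * K⁻¹ with hA
    have hAK : A * K = G := by rw [hA, Matrix.mul_assoc, nonsing_inv_mul _ hK, Matrix.mul_one]
    have hAdet : A.det ≠ 0 := by
      intro h0
      apply hgu.ne_zero
      rw [← hAK, det_mul, h0, zero_mul]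
    have hKU : IsUnit K := (isUnit_iff_isUnit_det _).2 hK
    have hAsymm : A.IsSymm := by
      have h1 : (Kᵀ * G).IsSymm := by
        rw [eq_kry _ _ _ _ _ hTG]
        exact kry_gram_symm _ _ _
      have h3 : Kᵀ * (Aᵀ * K) = Kᵀ * (A * K) := by
        have e2 : Gᵀ = Kᵀ * Aᵀ := by rw [← hAK, transpose_mul A K]
        rw [hAK, ← h1.eq, transpose_mul Kᵀ G, transpose_transpose, e2, Matrix.mul_assoc]
      have hKT : IsUnit Kᵀ := (isUnit_iff_isUnit_det _).2 (by rwa [det_transpose])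
      exact hKU.mul_right_cancel (hKT.mul_left_cancel h3)
    have hcomm : A * T = Tᵀ * A := by
      apply hKU.mul_right_cancel
      rw [Matrix.mul_assoc, mul_kry h2 T _ _ _ _ hcT, ← Matrix.mul_assoc, hAK, ← hTG,
        Matrix.mul_assoc, hAK]
    have hBsymm : (A * T).IsSymm := by
      have : (A * T)ᵀ = A * T := by rw [transpose_mul, hAsymm.eq, hcomm]
      exact this
    have hl : 4 * A.det / a ≠ 0 := div_ne_zero (mul_ne_zero h4 hAdet) ha
    have hinv : A⁻¹ * (A * T) = T := by
      rw [← Matrix.mul_assoc, nonsing_inv_mul _ (isUnit_iff_ne_zero.2 hAdet), Matrix.one_mul]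
    refine ⟨⟨⟨Units.mk0 _ hl, A, A * T⟩, hAsymm, hBsymm, ?_⟩, ?_⟩
    · have := cub_mul_left A 1 T
      rw [Matrix.mul_one] at this
      simp only [Units.val_mk0]
      rw [this, hcT, hfe, smul_smul, smul_smul]
      congr 1
      field_simp
    · apply Units.ext
      change A * kry (A⁻¹ * (A * T)) (w (A⁻¹ * (A * T))) = G
      rw [hinv, hAK]

theorem card_MSet {F : Type*} [Field F] (h2 : (2 : F) ≠ 0) (h3 : (3 : F) ≠ 0)
    (f : F × F × F × F) (hf : dq f ≠ 0) :
    Nat.card (MSet f) = Nat.card (Matrix.GeneralLinearGroup (Fin 3) F) := by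
  obtain ⟨t, ht⟩ := exists_shear h2 h3 f hf
  rw [← card_MSet_aux h2 (shear t f) (by rwa [dq_shear]) ht]
  refine Nat.card_congr ⟨fun x => ⟨(x.1.1, x.1.2.1 - t • x.1.2.2, x.1.2.2), ?_, ?_, ?_⟩,
    fun x => ⟨(x.1.1, x.1.2.1 + t • x.1.2.2, x.1.2.2), ?_, ?_, ?_⟩, ?_, ?_⟩
  · exact x.2.1.sub (x.2.2.1.smul t)
  · exact x.2.2.1
  · simp only
    rw [cub_shear, x.2.2.2, shear_smul]
  · exact x.2.1.add (x.2.2.1.smul t)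
  · exact x.2.2.1
  · have := cub_shear (-t) x.1.2.1 x.1.2.2
    rw [neg_smul, sub_neg_eq_add] at this
    simp only
    rw [this, x.2.2.2, shear_smul, shear_neg]
  · intro x; ext <;> simp
  · intro x; ext <;> simp

/-- The cuspidal cubic has exactly `q` points. -/
theorem card_cusp {F : Type*} [Field F] (h2 : (2 : F) ≠ 0) (h3 : (3 : F) ≠ 0) :
    Nat.card {x : F × F // 4 * x.1 ^ 3 + 27 * x.2 ^ 2 = 0} = Nat.card F := by
  refine Nat.card_congr ⟨fun x => -3 * x.1.2 / (2 * x.1.1),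
    fun t => ⟨(-3 * t ^ 2, 2 * t ^ 3), by ring⟩, ?_, ?_⟩
  · rintro ⟨⟨p, s⟩, h⟩
    simp only at h
    by_cases hp : p = 0
    · subst hp
      have hs : s = 0 := by
        have : (3 * 3 * 3) * s ^ 2 = 0 := by linear_combination h
        exact pow_eq_zero_iff (two_ne_zero) |>.1
          ((mul_eq_zero.1 this).resolve_left (mul_ne_zero (mul_ne_zero h3 h3) h3))
      simp [hs]
    · have e1 : -3 * (-3 * s / (2 * p)) ^ 2 = p := by
        field_simp
        linear_combination -h
      have e2 : 2 * (-3 * s / (2 * p)) ^ 3 = s := by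
        field_simp
        linear_combination -s * h
      simp only [Subtype.mk.injEq, Prod.mk.injEq]
      exact ⟨e1, e2⟩
  · intro t
    simp only
    by_cases ht : t = 0
    · simp [ht]
    · field_simp

theorem card_compl' {α : Type*} [Finite α] (p : α → Prop) :
    Nat.card {x // p x} + Nat.card {x // ¬ p x} = Nat.card α := by
  classical
  have := Fintype.ofFinite α
  rw [← Nat.card_sum]
  exact Nat.card_congr (Equiv.sumCompl p)

theorem card_dq_a {F : Type*} [Field F] (h3 : (3 : F) ≠ 0) :
    Nat.card {f : F × F × F × F // dq f ≠ 0 ∧ f.1 ≠ 0} =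
      Nat.card (Fˣ × F × {x : F × F // ¬ (4 * x.1 ^ 3 + 27 * x.2 ^ 2 = 0)}) := by
  symm
  have hdq : ∀ a h p s : F, dq (a, 3 * a * h, a * (3 * h ^ 2 + p), a * (h ^ 3 + p * h + s)) =
      - a ^ 4 * (4 * p ^ 3 + 27 * s ^ 2) := by
    intro a h p s
    simp only [dq, disc3]; ring
  refine Nat.card_congr (Equiv.ofBijective (fun x => ⟨(x.1.1, 3 * x.1.1 * x.2.1,
    x.1.1 * (3 * x.2.1 ^ 2 + x.2.2.1.1), x.1.1 * (x.2.1 ^ 3 + x.2.2.1.1 * x.2.1 + x.2.2.1.2)), ?_, ?_⟩) ⟨?_, ?_⟩)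
  · rw [hdq]
    exact mul_ne_zero (neg_ne_zero.2 (pow_ne_zero _ x.1.ne_zero)) x.2.2.2
  · exact x.1.ne_zero
  · rintro ⟨a, h, ⟨⟨p, s⟩, hx⟩⟩ ⟨a', h', ⟨⟨p', s'⟩, hx'⟩⟩ he
    simp only [Subtype.mk.injEq, Prod.mk.injEq] at he
    obtain ⟨e1, e2, e3, e4⟩ := he
    have e1' : a = a' := Units.ext e1
    subst e1'
    have e2' : h = h' := mul_left_cancel₀ (mul_ne_zero h3 a.ne_zero) e2
    subst e2'
    have e3' : p = p' := by
      have := mul_left_cancel₀ a.ne_zero e3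
      linear_combination this
    subst e3'
    have e4' : s = s' := by
      have := mul_left_cancel₀ a.ne_zero e4
      linear_combination this
    subst e4'
    rfl
  · rintro ⟨⟨a, b, c, d⟩, hx, ha⟩
    simp only at ha
    obtain ⟨h, hh⟩ : ∃ h, b = 3 * a * h := ⟨b / (3 * a), by field_simp⟩
    obtain ⟨p, hp⟩ : ∃ p, c = a * (3 * h ^ 2 + p) := ⟨c / a - 3 * h ^ 2, by field_simp; ring⟩
    obtain ⟨s, hs⟩ : ∃ s, d = a * (h ^ 3 + p * h + s) := ⟨d / a - (h ^ 3 + p * h), by field_simp; ring⟩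
    subst hh hp hs
    have hx' := hx
    rw [hdq] at hx'
    exact ⟨(Units.mk0 a ha, h, ⟨(p, s), (mul_ne_zero_iff.1 hx').2⟩), rfl⟩

theorem card_dq_zero {F : Type*} [Field F] (h2 : (2 : F) ≠ 0) :
    Nat.card {f : F × F × F × F // dq f ≠ 0 ∧ ¬ f.1 ≠ 0} = Nat.card (Fˣ × F × Fˣ) := by
  have h4 : (4 : F) ≠ 0 := by
    have : (4 : F) = 2 * 2 := by norm_num
    rw [this]; exact mul_ne_zero h2 h2
  symm
  have hdq : ∀ b c d : F, dq (0, b, c, d) = b ^ 2 * (c ^ 2 - 4 * b * d) := by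
    intro b c d
    simp only [dq, disc3]; ring
  have hcalc : ∀ b c e : F, b ≠ 0 → c ^ 2 - 4 * b * ((c ^ 2 - e) / (4 * b)) = e := by
    intro b c e hb
    field_simp
    ring
  refine Nat.card_congr (Equiv.ofBijective (fun x => ⟨(0, x.1.1, x.2.1,
    (x.2.1 ^ 2 - x.2.2.1) / (4 * x.1.1)), ?_, ?_⟩) ⟨?_, ?_⟩)
  · rw [hdq, hcalc _ _ _ x.1.ne_zero]
    exact mul_ne_zero (pow_ne_zero _ x.1.ne_zero) x.2.2.ne_zero
  · simp
  · rintro ⟨b, c, e⟩ ⟨b', c', e'⟩ he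
    simp only [Subtype.mk.injEq, Prod.mk.injEq, true_and] at he
    obtain ⟨e1, e2, e3⟩ := he
    have e1' : b = b' := Units.ext e1
    subst e1' e2
    have h := hcalc b c e b.ne_zero
    rw [e3, hcalc _ _ _ b.ne_zero] at h
    have : e = e' := Units.ext h.symm
    rw [this]
  · rintro ⟨⟨a, b, c, d⟩, hx, ha⟩
    simp only [not_not] at ha
    subst ha
    have hx' := hx
    rw [hdq] at hx'
    have hb : b ≠ 0 := fun h => hx' (by simp [h])
    refine ⟨(Units.mk0 b hb, c, Units.mk0 _ (mul_ne_zero_iff.1 hx').2), ?_⟩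
    simp only [Units.val_mk0, Subtype.mk.injEq, Prod.mk.injEq, true_and]
    field_simp
    ring

theorem card_dq {F : Type*} [Field F] [Fintype F] (h2 : (2 : F) ≠ 0) (h3 : (3 : F) ≠ 0) :
    (Nat.card {f : F × F × F × F // dq f ≠ 0} : ℤ) =
      ((Fintype.card F : ℤ) - 1) * ((Fintype.card F : ℤ) ^ 3 - Fintype.card F) := by
  classical
  have hq : 1 ≤ Fintype.card F := Fintype.card_pos
  have hsplit : Nat.card {f : F × F × F × F // dq f ≠ 0} =
      Nat.card {f : F × F × F × F // dq f ≠ 0 ∧ f.1 ≠ 0} +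
      Nat.card {f : F × F × F × F // dq f ≠ 0 ∧ ¬ f.1 ≠ 0} := by
    rw [← card_compl' (fun x : {f : F × F × F × F // dq f ≠ 0} => x.1.1 ≠ 0)]
    congr 1
    · exact Nat.card_congr (Equiv.subtypeSubtypeEquivSubtypeInter (fun f : F × F × F × F => dq f ≠ 0)
        (fun f => f.1 ≠ 0))
    · exact Nat.card_congr (Equiv.subtypeSubtypeEquivSubtypeInter (fun f : F × F × F × F => dq f ≠ 0)
        (fun f => ¬ f.1 ≠ 0))
  have hcusp := card_compl' (fun x : F × F => 4 * x.1 ^ 3 + 27 * x.2 ^ 2 = 0)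
  rw [card_cusp h2 h3, Nat.card_prod] at hcusp
  have hU : (Nat.card Fˣ : ℤ) = (Fintype.card F : ℤ) - 1 := by
    rw [Nat.card_eq_fintype_card, Fintype.card_units]
    push_cast [hq]; rfl
  rw [hsplit, card_dq_a h3, card_dq_zero h2]
  simp only [Nat.card_prod]
  zify at hcusp
  push_cast
  rw [hU]
  rw [Nat.card_eq_fintype_card (α := F)] at hcusp ⊢
  linear_combination ((Fintype.card F : ℤ) - 1) * (Fintype.card F : ℤ) * hcusp

/-- Reorganising triples `(l, A, B)` by the cubic form `l⁻¹ • cub A B`. -/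
theorem card_units_mul {F : Type*} [Field F] [Fintype F] (h2 : (2 : F) ≠ 0) (h3 : (3 : F) ≠ 0) :
    Nat.card Fˣ * Nat.card {P : Matrix (Fin 3) (Fin 3) F × Matrix (Fin 3) (Fin 3) F //
        P.1.IsSymm ∧ P.2.IsSymm ∧ disc4 P.1 P.2 ≠ 0} =
    Nat.card {f : F × F × F × F // dq f ≠ 0} * Nat.card (Matrix.GeneralLinearGroup (Fin 3) F) := by
  classical
  have e : (Fˣ × {P : Matrix (Fin 3) (Fin 3) F × Matrix (Fin 3) (Fin 3) F //
        P.1.IsSymm ∧ P.2.IsSymm ∧ disc4 P.1 P.2 ≠ 0}) ≃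
      (Σ f : {f : F × F × F × F // dq f ≠ 0}, MSet f.1) := by
    refine Equiv.ofBijective (fun x => ⟨⟨(x.1⁻¹ : Fˣ).1 • cub x.2.1.1 x.2.1.2, ?_⟩,
      ⟨(x.1, x.2.1), x.2.2.1, x.2.2.2.1, ?_⟩⟩) ⟨?_, ?_⟩
    · rw [dq_smul, ← disc4_eq]
      exact mul_ne_zero (pow_ne_zero _ (Units.ne_zero _)) x.2.2.2.2
    · simp only
      rw [smul_smul, Units.mul_inv, one_smul]
    · intro x y hxy
      have : ∀ u v : (Σ f : {f : F × F × F × F // dq f ≠ 0}, MSet f.1), u = v → u.2.1 = v.2.1 := by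
        rintro u v rfl; rfl
      have := this _ _ hxy
      simp only [Prod.mk.injEq] at this
      exact Prod.ext this.1 (Subtype.ext this.2)
    · rintro ⟨⟨f, hf⟩, ⟨⟨l, A, B⟩, hA, hB, hAB⟩⟩
      simp only at hA hB hAB
      have hff : f = (l⁻¹ : Fˣ).1 • cub A B := by
        rw [hAB, smul_smul, Units.inv_mul, one_smul]
      subst hff
      refine ⟨(l, ⟨(A, B), hA, hB, ?_⟩), rfl⟩
      rw [disc4_eq]
      rw [dq_smul] at hf
      exact (mul_ne_zero_iff.1 hf).2
  rw [← Nat.card_prod, Nat.card_congr e, Nat.card_sigma]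
  rw [Finset.sum_congr rfl (fun f _ => card_MSet h2 h3 f.1 f.2), Finset.sum_const, smul_eq_mul,
    Finset.card_univ, Nat.card_eq_fintype_card (α := {f : F × F × F × F // dq f ≠ 0})]

/-- Over a finite field `F` of cardinality `q` coprime to `6`, the number of pairs `(A,B)`
of symmetric 3×3 matrices over `F` with `Δ₄(A,B) ≠ 0` is `q⁴(q−1)(q²−1)²(q³−1)`. -/
theorem card_symPairs_disc4_ne_zero (F : Type*) [Field F] [Fintype F] (q : ℕ)
    (hq : Fintype.card F = q) (hco : Nat.Coprime q 6) :
    Nat.card {P : Matrix (Fin 3) (Fin 3) F × Matrix (Fin 3) (Fin 3) F //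
        P.1.IsSymm ∧ P.2.IsSymm ∧ disc4 P.1 P.2 ≠ 0} =
      q ^ 4 * (q - 1) * (q ^ 2 - 1) ^ 2 * (q ^ 3 - 1) := by
  classical
  have hne : ∀ n : ℕ, n.Prime → n ∣ 6 → (n : F) ≠ 0 := by
    intro n hn h6 h0
    obtain ⟨p, hp⟩ := CharP.exists F
    obtain ⟨m, hpp, hm⟩ := FiniteField.card F p
    have hpn : p ∣ n := (CharP.cast_eq_zero_iff F p n).1 h0
    have hpq : p ∣ q := by
      rw [← hq, hm]
      exact dvd_pow_self _ m.ne_zero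
    have : p ∣ 1 := by
      rw [← hco]
      exact Nat.dvd_gcd hpq (hpn.trans h6)
    exact hpp.one_lt.ne' (Nat.dvd_one.1 this)
  have h2 : (2 : F) ≠ 0 := by exact_mod_cast hne 2 Nat.prime_two (by norm_num)
  have h3 : (3 : F) ≠ 0 := by exact_mod_cast hne 3 Nat.prime_three (by norm_num)
  have hq2 : 1 < q := hq ▸ Fintype.one_lt_card
  have main := card_units_mul (F := F) h2 h3
  have hdq := card_dq (F := F) h2 h3
  have hU : (Nat.card Fˣ : ℤ) = (q : ℤ) - 1 := by
    rw [Nat.card_eq_fintype_card, Fintype.card_units, hq]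
    push_cast [hq2.le]; rfl
  have hGL : (Nat.card (Matrix.GeneralLinearGroup (Fin 3) F) : ℤ) =
      ((q : ℤ) ^ 3 - 1) * ((q : ℤ) ^ 3 - q) * ((q : ℤ) ^ 3 - q ^ 2) := by
    rw [Matrix.card_GL_field, hq, Fin.prod_univ_three]
    have a1 : 1 ≤ q ^ 3 := Nat.one_le_pow _ _ hq2.le
    have a2 : q ≤ q ^ 3 := Nat.le_self_pow (by norm_num) _
    have a3 : q ^ 2 ≤ q ^ 3 := Nat.pow_le_pow_right hq2.le (by norm_num)
    simp only [Fin.val_zero, Fin.val_one, Fin.val_two, pow_zero, pow_one]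
    push_cast [a1, a2, a3]
    ring
  rw [hq] at hdq
  have b1 : 1 ≤ q ^ 2 := Nat.one_le_pow _ _ hq2.le
  have b2 : 1 ≤ q ^ 3 := Nat.one_le_pow _ _ hq2.le
  zify at main
  rw [hU, hdq, hGL] at main
  have hq0 : (q : ℤ) - 1 ≠ 0 := by
    have : (1 : ℤ) < q := by exact_mod_cast hq2
    omega
  zify [hq2.le, b1, b2]
  apply mul_left_cancel₀ hq0
  rw [main]
  ring
end
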